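/- Let R > 0, let f be any polynomial in the entries z₁₁, z₁₂, z₂₁, z₂₂ of a 2×2 complex matrix, and let Z be a 2×2 complex matrix with R²·1 − ZZ* positive definite. Then (i/2π³) ∫_{U(2)_R} f(W) / (det(W−Z))² dV = f(Z), where the integral over U(2)_R is the explicit parametrized iterated integral described below. -/

import Mathlib

noncomputable section

open MvPolynomial
open scoped ComplexOrder

/-- The parametrization of `U(2)_R`:
`W(α,φ,θ,ψ) = Re^{iα}·[[e^{i(φ+ψ)/2}cos(θ/2), i e^{i(φ−ψ)/2}sin(θ/2)],
[i e^{i(ψ−φ)/2}sin(θ/2), e^{−i(φ+ψ)/2}cos(θ/2)]]`. -/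
def Wparam (R α φ θ ψ : ℝ) : Matrix (Fin 2) (Fin 2) ℂ :=
  ((R : ℂ) * Complex.exp (Complex.I * α)) •
    !![Complex.exp (Complex.I * (φ + ψ) / 2) * (Real.cos (θ / 2) : ℂ),
         Complex.I * Complex.exp (Complex.I * (φ - ψ) / 2) * (Real.sin (θ / 2) : ℂ);
       Complex.I * Complex.exp (Complex.I * (ψ - φ) / 2) * (Real.sin (θ / 2) : ℂ),
         Complex.exp (-Complex.I * (φ + ψ) / 2) * (Real.cos (θ / 2) : ℂ)]

/-- `∫_{U(2)_R} g dV`, defined as the iterated integral of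
`g(W(α,φ,θ,ψ)) · (R⁴/(8i)) e^{4iα} sinθ` over
`(α,φ,θ,ψ) ∈ [0,π)×[0,2π)×(0,π)×[−2π,2π)`; with this orientation
`∫_{U(2)_R} dV/(det W)² = −2π³i`. -/
def U2int (R : ℝ) (g : Matrix (Fin 2) (Fin 2) ℂ → ℂ) : ℂ :=
  ∫ α in (0 : ℝ)..Real.pi, ∫ φ in (0 : ℝ)..(2 * Real.pi),
    ∫ θ in (0 : ℝ)..Real.pi, ∫ ψ in (-(2 * Real.pi))..(2 * Real.pi),
      g (Wparam R α φ θ ψ) * ((R : ℂ) ^ 4 / (8 * Complex.I)) *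
        Complex.exp (4 * Complex.I * α) * (Real.sin θ : ℂ)

/-!
Write `n = 2`. If `W` runs over a cycle on which derivatives along the left-invariant fields
`W ↦ W X` integrate to zero, then `∫ Dg(W)[Z] (det W)ⁿ = 0` for every direction `Z`: in the frame
`W Eᵢⱼ` the vector `Z` has coefficients `(W⁻¹ Z)ᵢⱼ`, and after multiplication by `(det W)ⁿ` their
divergence vanishes. Applied to `k(Y) = f(Z + Y) / (det Y)ⁿ`, this makes
`∫ k(W - t Z) (det W)ⁿ` independent of `t ∈ [0, 1]`, where `det (W - t Z) ≠ 0` because `Z` lies in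
`𝔻⁺_R`. At `t = 1` this is the integral of the theorem; at `t = 0` it is `∫ f(Z + W)`, and shrinking
`W` to `0` turns it into the mean value `vol · f(Z)`.

In Euler angles the volume density is `sin θ`, and `sin θ` times a left-invariant field is
divergence free; its coefficients are `2π`-periodic in `ψ`, and the one along `∂/∂θ` vanishes at
`θ = 0, π`. The boundary terms in `α` and `φ` replace `W` by `-W`, which the shift `ψ ↦ ψ + 2π`
undoes.
-/

section FubiniFTC
open MeasureTheory Set

lemma setIntegral_prod_eq_zero {S T E : Type*} [MeasurableSpace S] [MeasurableSpace T]
    [NormedAddCommGroup E] [NormedSpace ℝ E] {μ : Measure S} {ν : Measure T} [SFinite μ]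
    [SFinite ν] {A : Set S} {K : Set T} {F : S × T → E} (hF : ∀ x, ∫ p in K, F (x, p) ∂ν = 0) :
    ∫ p in A ×ˢ K, F p ∂(μ.prod ν) = 0 := by
  by_cases hint : IntegrableOn F (A ×ˢ K) (μ.prod ν)
  · simp only [setIntegral_prod F hint, hF, integral_zero]
  · exact integral_undef hint

lemma setIntegral_Icc_shift_sub_eq_zero {E : Type*} [NormedAddCommGroup E] [NormedSpace ℝ E]
    {f : ℝ → E} (hf : Continuous f) {c : ℝ} (hc : 0 ≤ c) (hper : Function.Periodic f (2 * c)) :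
    ∫ x in Icc (-c) c, (f (x + c) - f x) = 0 := by
  rw [integral_Icc_eq_integral_Ioc, ← intervalIntegral.integral_of_le (by linarith),
    intervalIntegral.integral_sub (Continuous.intervalIntegrable (by fun_prop) _ _)
      (hf.intervalIntegrable _ _), intervalIntegral.integral_comp_add_right, sub_eq_zero]
  convert hper.intervalIntegral_add_eq (-c + c) (-c) using 2 <;> ring

variable {T E : Type*} [TopologicalSpace T] [T2Space T] [MeasurableSpace T] [OpensMeasurableSpace T]
  [NormedAddCommGroup E] [NormedSpace ℝ E] {ν : Measure T} [IsLocallyFiniteMeasure ν] [SFinite ν]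
  {K : Set T} {a b : ℝ}

lemma setIntegral_Icc_prod (hK : IsCompact K) (hab : a ≤ b) {F : ℝ × T → E}
    (hF : ContinuousOn F (Icc a b ×ˢ K)) :
    ∫ p in Icc a b ×ˢ K, F p ∂(volume.prod ν) = ∫ x in a..b, ∫ p in K, F (x, p) ∂ν := by
  rw [setIntegral_prod _ (hF.integrableOn_compact (isCompact_Icc.prod hK)),
    integral_Icc_eq_integral_Ioc, intervalIntegral.integral_of_le hab]

lemma intervalIntegral_setIntegral_of_hasDerivAt [CompleteSpace E] (hK : IsCompact K) (hab : a ≤ b)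
    {g g' : ℝ → T → E} (hg : ∀ x ∈ Icc a b, ∀ p ∈ K, HasDerivAt (g · p) (g' x p) x)
    (hg' : ContinuousOn (Function.uncurry g') (Icc a b ×ˢ K)) :
    ∫ x in a..b, ∫ p in K, g' x p ∂ν = ∫ p in K, (g b p - g a p) ∂ν := by
  have hint : Integrable (Function.uncurry g')
      ((volume.restrict (Ioc a b)).prod (ν.restrict K)) := by
    rw [Measure.prod_restrict]
    exact (hg'.integrableOn_compact (isCompact_Icc.prod hK)).mono_set
      (prod_mono_left Ioc_subset_Icc_self)
  rw [intervalIntegral_integral_swap (by rwa [uIoc_of_le hab])]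
  refine setIntegral_congr_fun hK.measurableSet fun p hp => ?_
  refine intervalIntegral.integral_eq_sub_of_hasDerivAt
    (fun x hx => hg x (by rwa [← uIcc_of_le hab]) p hp) (ContinuousOn.intervalIntegrable ?_)
  rw [uIcc_of_le hab]
  exact hg'.comp (f := fun x => (x, p)) (by fun_prop) fun x hx => ⟨hx, hp⟩

lemma setIntegral_eq_of_setIntegral_hasDerivAt_eq_zero [CompleteSpace E] (hK : IsCompact K)
    (hab : a ≤ b) {g g' : ℝ → T → E} (hcont : ∀ x ∈ Icc a b, ContinuousOn (g x) K)
    (hg : ∀ x ∈ Icc a b, ∀ p ∈ K, HasDerivAt (g · p) (g' x p) x)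
    (hg' : ContinuousOn (Function.uncurry g') (Icc a b ×ˢ K))
    (hzero : ∀ x ∈ Ioc a b, ∫ p in K, g' x p ∂ν = 0) :
    ∫ p in K, g b p ∂ν = ∫ p in K, g a p ∂ν := by
  rw [← sub_eq_zero, ← integral_sub
    ((hcont b (right_mem_Icc.2 hab)).integrableOn_compact hK)
    ((hcont a (left_mem_Icc.2 hab)).integrableOn_compact hK),
    ← intervalIntegral_setIntegral_of_hasDerivAt hK hab hg hg',
    intervalIntegral.integral_of_le hab]
  exact setIntegral_eq_zero_of_forall_eq_zero hzero

lemma setIntegral_Icc_prod_of_hasDerivAt [CompleteSpace E] (hK : IsCompact K) (hab : a ≤ b)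
    {G G' : ℝ × T → E}
    (hG : ∀ x p, HasDerivAt (fun x => G (x, p)) (G' (x, p)) x) (hG' : Continuous G') :
    ∫ p in Icc a b ×ˢ K, G' p ∂(volume.prod ν) = ∫ p in K, (G (b, p) - G (a, p)) ∂ν := by
  rw [setIntegral_Icc_prod hK hab hG'.continuousOn]
  exact intervalIntegral_setIntegral_of_hasDerivAt hK hab (g := fun x p => G (x, p))
    (g' := fun x p => G' (x, p)) (fun x _ p _ => hG x p) hG'.continuousOn

end FubiniFTC

section MatrixCalculus
open Matrix
open scoped Matrix.Norms.L2Operator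

variable {𝕜 n : Type*} [RCLike 𝕜] [Fintype n] [DecidableEq n]

lemma contDiff_entry (i j : n) {k : WithTop ℕ∞} : ContDiff 𝕜 k fun A : Matrix n n 𝕜 => A i j :=
  (entryLinearMap 𝕜 𝕜 i j).toContinuousLinearMap.contDiff

lemma contDiff_eval_entries (p : MvPolynomial (n × n) 𝕜) {k : WithTop ℕ∞} :
    ContDiff 𝕜 k fun A : Matrix n n 𝕜 => eval (fun q => A q.1 q.2) p := by
  simp only [eval_eq]
  exact ContDiff.sum fun d _ => contDiff_const.mul <|
    contDiff_prod fun q _ => (contDiff_entry q.1 q.2).pow _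

lemma contDiff_det {k : WithTop ℕ∞} : ContDiff 𝕜 k (det : Matrix n n 𝕜 → 𝕜) := by
  simp only [funext det_apply']
  exact ContDiff.sum fun σ _ => contDiff_const.mul <| contDiff_prod fun i _ => contDiff_entry _ _

lemma fderiv_det_mul (A X : Matrix n n 𝕜) :
    fderiv 𝕜 (det : Matrix n n 𝕜 → 𝕜) A (A * X) = det A * trace X := by
  have along_line : HasDerivAt (fun s : 𝕜 => det (A + s • (A * X)))
      (fderiv 𝕜 (det : Matrix n n 𝕜 → 𝕜) A (A * X)) 0 := by
    have hline : HasDerivAt (fun s : 𝕜 => A + s • (A * X)) (A * X) 0 := by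
      simpa using ((hasDerivAt_id (0 : 𝕜)).smul_const (A * X)).const_add A
    exact HasFDerivAt.comp_hasDerivAt_of_eq _
      (contDiff_det (k := 1).differentiable one_ne_zero A).hasFDerivAt hline (by simp)
  refine along_line.unique ?_
  have expand (s : 𝕜) : det (A + s • (A * X)) = det A * (1 + trace X * s +
      (det (1 + (Polynomial.X : Polynomial 𝕜) • X.map Polynomial.C)).divX.divX.eval s * s ^ 2) := by
    rw [← det_one_add_smul, ← det_mul, mul_add, mul_one, mul_smul_comm]
  simp only [expand]
  generalize (det (1 + (Polynomial.X : Polynomial 𝕜) • X.map Polynomial.C)).divX.divX = q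
  have := ((((hasDerivAt_id (0 : 𝕜)).const_mul (trace X)).const_add 1).add
    ((q.hasDerivAt 0).mul ((hasDerivAt_id (0 : 𝕜)).pow 2))).const_mul (det A)
  simpa using this

lemma contDiffAt_matrix_inv {A : Matrix n n 𝕜} (hA : A.det ≠ 0) {k : WithTop ℕ∞} :
    ContDiffAt 𝕜 k (fun B : Matrix n n 𝕜 => B⁻¹) A := by
  obtain ⟨u, rfl⟩ := (isUnit_iff_isUnit_det A).mpr hA.isUnit
  simpa only [nonsing_inv_eq_ringInverse] using contDiffAt_ringInverse 𝕜 u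

lemma fderiv_matrix_inv_mul {A : Matrix n n 𝕜} (hA : A.det ≠ 0) (X : Matrix n n 𝕜) :
    fderiv 𝕜 (fun B : Matrix n n 𝕜 => B⁻¹) A (A * X) = -(X * A⁻¹) := by
  obtain ⟨u, rfl⟩ := (isUnit_iff_isUnit_det A).mpr hA.isUnit
  have h := (hasFDerivAt_ringInverse (𝕜 := 𝕜) u).fderiv
  simp only [nonsing_inv_eq_ringInverse, h, Ring.inverse_unit, _root_.neg_apply,
    ContinuousLinearMap.mulLeftRight_apply, ← mul_assoc, Units.inv_mul, one_mul]

lemma fderiv_apply_inv_mul {A : Matrix n n 𝕜} (hA : A.det ≠ 0) (X Z : Matrix n n 𝕜) (i j : n) :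
    fderiv 𝕜 (fun B : Matrix n n 𝕜 => (B⁻¹ * Z) i j) A (A * X) = -(X * (A⁻¹ * Z)) i j := by
  have hinv : HasFDerivAt (fun B : Matrix n n 𝕜 => B⁻¹ * Z) _ A :=
    ((contDiffAt_matrix_inv hA (k := 1)).differentiableAt one_ne_zero).hasFDerivAt.mul_const' Z
  have hentry : HasFDerivAt (fun C : Matrix n n 𝕜 => C i j)
    (entryLinearMap 𝕜 𝕜 i j).toContinuousLinearMap (A⁻¹ * Z) :=
    (entryLinearMap 𝕜 𝕜 i j).toContinuousLinearMap.hasFDerivAt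
  rw [show (fun B : Matrix n n 𝕜 => (B⁻¹ * Z) i j) = (fun C => C i j) ∘ fun B => B⁻¹ * Z from rfl,
    (hentry.comp A hinv).fderiv]
  simp [fderiv_matrix_inv_mul hA, ← mul_assoc]

lemma contDiffAt_apply_inv_mul {A : Matrix n n 𝕜} (hA : A.det ≠ 0) (Z : Matrix n n 𝕜) (i j : n)
    {k : WithTop ℕ∞} : ContDiffAt 𝕜 k (fun B : Matrix n n 𝕜 => (B⁻¹ * Z) i j) A :=
  (contDiff_entry i j).contDiffAt.comp A ((contDiffAt_matrix_inv hA).mul contDiffAt_const)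

lemma fderiv_det_pow_mul_inv_mul {A : Matrix n n 𝕜} (hA : A.det ≠ 0) (X Z : Matrix n n 𝕜)
    (N : ℕ) (i j : n) :
    fderiv 𝕜 (fun B : Matrix n n 𝕜 => det B ^ N * (B⁻¹ * Z) i j) A (A * X) =
      det A ^ N * (N * trace X * (A⁻¹ * Z) i j - (X * (A⁻¹ * Z)) i j) := by
  have hdet := (contDiff_det (k := 1).differentiable one_ne_zero A).hasFDerivAt.pow N
  have hentry : DifferentiableAt 𝕜 (fun B : Matrix n n 𝕜 => (B⁻¹ * Z) i j) A :=
    (contDiffAt_apply_inv_mul hA Z i j (k := 1)).differentiableAt one_ne_zero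
  rw [fderiv_fun_mul hdet.differentiableAt hentry, hdet.fderiv]
  simp only [_root_.add_apply, _root_.smul_apply, fderiv_det_mul, fderiv_apply_inv_mul hA]
  rcases N with _ | N
  · simp
  · simp only [Nat.add_sub_cancel, smul_eq_mul, nsmul_eq_mul, pow_succ]
    ring

lemma sum_fderiv_det_pow_card_mul_inv_mul {A : Matrix n n 𝕜} (hA : A.det ≠ 0)
    (Z : Matrix n n 𝕜) :
    ∑ i, ∑ j, fderiv 𝕜 (fun B : Matrix n n 𝕜 => det B ^ Fintype.card n * (B⁻¹ * Z) i j) A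
      (A * single i j 1) = 0 := by
  have term (i j : n) : fderiv 𝕜
      (fun B : Matrix n n 𝕜 => det B ^ Fintype.card n * (B⁻¹ * Z) i j) A (A * single i j 1) =
      det A ^ Fintype.card n *
        ((if i = j then Fintype.card n * (A⁻¹ * Z) i i else 0) - (A⁻¹ * Z) j j) := by
    rw [fderiv_det_pow_mul_inv_mul hA, single_mul_apply_same, one_mul]
    rcases eq_or_ne i j with rfl | hij
    · simp
    · simp [hij, trace_single_eq_of_ne i j (1 : 𝕜) hij]
  simp only [term, ← Finset.mul_sum, Finset.sum_sub_distrib, Finset.sum_ite_eq, Finset.mem_univ,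
    if_true, Finset.sum_const, Finset.card_univ, nsmul_eq_mul, sub_self, mul_zero]

lemma eq_sum_smul_mul_single {A : Matrix n n 𝕜} (hA : A.det ≠ 0) (Z : Matrix n n 𝕜) :
    Z = ∑ i, ∑ j, (A⁻¹ * Z) i j • (A * single i j 1) := by
  calc Z = A * (A⁻¹ * Z) := (mul_nonsing_inv_cancel_left A Z hA.isUnit).symm
    _ = _ := by
      conv_lhs => rw [matrix_eq_sum_single (A⁻¹ * Z)]
      simp [Finset.mul_sum, ← mul_smul_comm]

lemma fderiv_mul_det_pow_card_eq_sum {A : Matrix n n 𝕜} (hA : A.det ≠ 0) {g : Matrix n n 𝕜 → 𝕜}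
    (hg : DifferentiableAt 𝕜 g A) (Z : Matrix n n 𝕜) :
    fderiv 𝕜 g A Z * det A ^ Fintype.card n =
      ∑ i, ∑ j, fderiv 𝕜 (fun B => g B * (det B ^ Fintype.card n * (B⁻¹ * Z) i j)) A
        (A * single i j 1) := by
  have leibniz (i j : n) :
      fderiv 𝕜 (fun B => g B * (det B ^ Fintype.card n * (B⁻¹ * Z) i j)) A (A * single i j 1) =
      g A * fderiv 𝕜 (fun B : Matrix n n 𝕜 => det B ^ Fintype.card n * (B⁻¹ * Z) i j) A
          (A * single i j 1) +
        det A ^ Fintype.card n * ((A⁻¹ * Z) i j * fderiv 𝕜 g A (A * single i j 1)) := by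
    have hcoeff := ((contDiff_det (k := 1)).contDiffAt.pow (Fintype.card n)).mul
      (contDiffAt_apply_inv_mul hA Z i j)
    rw [fderiv_fun_mul hg (hcoeff.differentiableAt one_ne_zero)]
    simp [mul_assoc]
  simp only [leibniz, Finset.sum_add_distrib, ← Finset.mul_sum,
    sum_fderiv_det_pow_card_mul_inv_mul hA, mul_zero, zero_add]
  conv_lhs => rw [eq_sum_smul_mul_single hA Z]
  simp only [map_sum, map_smul, smul_eq_mul, mul_comm]

end MatrixCalculus

section Calculus

lemma continuousOn_fderiv_comp {𝕜 T E F : Type*} [NontriviallyNormedField 𝕜] [TopologicalSpace T]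
    [NormedAddCommGroup E] [NormedSpace 𝕜 E] [NormedAddCommGroup F] [NormedSpace 𝕜 F] {W : T → E}
    {h : E → F} {s : Set T} (hW : ContinuousOn W s) (hh : ∀ p ∈ s, ContDiffAt 𝕜 1 h (W p)) :
    ContinuousOn (fun p => fderiv 𝕜 h (W p)) s := fun p hp =>
  ((hh p hp).continuousAt_fderiv one_ne_zero).comp_continuousWithinAt (hW p hp)

lemma hasDerivAt_comp_add_ofReal_smul {E F : Type*} [NormedAddCommGroup E] [NormedSpace ℂ E]
    [NormedAddCommGroup F] [NormedSpace ℂ F] {f : E → F} {x v : E} {s : ℝ}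
    (hf : DifferentiableAt ℂ f (x + (s : ℂ) • v)) :
    HasDerivAt (fun s : ℝ => f (x + (s : ℂ) • v)) (fderiv ℂ f (x + (s : ℂ) • v) v) s := by
  have hline : HasDerivAt (fun s : ℝ => x + (s : ℂ) • v) v s := by
    simpa using (Complex.ofRealCLM.hasDerivAt.smul_const v).const_add x
  exact (hf.hasFDerivAt.restrictScalars ℝ).comp_hasDerivAt s hline

lemma hasDerivAt_mul_comp {E : Type*} [NormedAddCommGroup E] [NormedSpace ℂ E] {h : E → ℂ}
    {w : ℝ → E} {w' : E} {c : ℝ → ℂ} {c' : ℂ} {x : ℝ} (hc : HasDerivAt c c' x)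
    (hh : DifferentiableAt ℂ h (w x)) (hw : HasDerivAt w w' x) :
    HasDerivAt (fun y => c y * h (w y)) (c' * h (w x) + c x * fderiv ℂ h (w x) w') x :=
  hc.mul ((hh.hasFDerivAt.restrictScalars ℝ).comp_hasDerivAt x hw)

end Calculus

section InvariantCycle
open MeasureTheory Matrix Set
open scoped Matrix.Norms.L2Operator

variable {T n : Type*} [MeasurableSpace T] [Fintype n] [DecidableEq n]

/-- The parametrized cycle `W : T → Matrix n n ℂ`, integrated over `K` against `ν`, is
infinitesimally invariant under right translations: the derivative `h ↦ Dh(W)[WX]` along each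
left-invariant field `X` integrates to zero, for every `h` holomorphic near the cycle. -/
def IsInvariantCycle (ν : Measure T) (K : Set T) (W : T → Matrix n n ℂ) : Prop :=
  ∀ h : Matrix n n ℂ → ℂ, (∀ p, ContDiffAt ℂ 1 h (W p)) →
    ∀ X, ∫ p in K, fderiv ℂ h (W p) (W p * X) ∂ν = 0

namespace IsInvariantCycle

variable {ν : Measure T} {K : Set T} {W : T → Matrix n n ℂ}

lemma setIntegral_fderiv_comp_add_smul (hW : IsInvariantCycle ν K W) {f : Matrix n n ℂ → ℂ}
    (hf : ContDiff ℂ 1 f) (Z : Matrix n n ℂ) {s : ℂ} (hs : s ≠ 0) :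
    ∫ p in K, fderiv ℂ f (Z + s • W p) (W p) ∂ν = 0 := by
  have hscaled : ContDiff ℂ 1 fun B : Matrix n n ℂ => f (Z + s • B) := by fun_prop
  have h := hW _ (fun p => hscaled.contDiffAt) 1
  simp only [fderiv_comp_smul (f := fun B => f (Z + B)) s, fderiv_comp_add_left, mul_one,
    _root_.smul_apply, integral_smul] at h
  exact (smul_eq_zero.mp h).resolve_left hs

variable [TopologicalSpace T] [OpensMeasurableSpace T] [T2Space T] [IsLocallyFiniteMeasure ν]

lemma setIntegral_fderiv_mul_det_pow (hW : IsInvariantCycle ν K W) (hcont : Continuous W)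
    (hK : IsCompact K) (hdet : ∀ p, (W p).det ≠ 0) {g : Matrix n n ℂ → ℂ}
    (hg : ∀ p, ContDiffAt ℂ 1 g (W p)) (Z : Matrix n n ℂ) :
    ∫ p in K, fderiv ℂ g (W p) Z * (W p).det ^ Fintype.card n ∂ν = 0 := by
  have hcoeff (i j : n) (p : T) : ContDiffAt ℂ 1
      (fun B => g B * (det B ^ Fintype.card n * (B⁻¹ * Z) i j)) (W p) :=
    (hg p).mul ((contDiff_det.contDiffAt.pow _).mul (contDiffAt_apply_inv_mul (hdet p) Z i j))
  have hint (i j : n) : IntegrableOn (fun p => fderiv ℂ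
      (fun B => g B * (det B ^ Fintype.card n * (B⁻¹ * Z) i j)) (W p) (W p * single i j 1)) K ν :=
    ((continuousOn_fderiv_comp hcont.continuousOn fun p _ => hcoeff i j p).clm_apply
      (hcont.mul continuous_const).continuousOn).integrableOn_compact hK
  simp only [fderiv_mul_det_pow_card_eq_sum (hdet _) ((hg _).differentiableAt one_ne_zero) Z]
  rw [integral_finsetSum _ fun i _ => integrable_finsetSum _ fun j _ => hint i j]
  refine Finset.sum_eq_zero fun i _ => ?_
  rw [integral_finsetSum _ fun j _ => hint i j]
  exact Finset.sum_eq_zero fun j _ => hW _ (hcoeff i j) _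

variable [SFinite ν]

lemma setIntegral_comp_add (hW : IsInvariantCycle ν K W) (hcont : Continuous W)
    (hK : IsCompact K) {f : Matrix n n ℂ → ℂ} (hf : ContDiff ℂ 1 f) (Z : Matrix n n ℂ) :
    ∫ p in K, f (Z + W p) ∂ν = ν.real K * f Z := by
  have homotopy := setIntegral_eq_of_setIntegral_hasDerivAt_eq_zero (ν := ν) hK zero_le_one
    (g := fun s p => f (Z + (s : ℂ) • W p))
    (fun s _ => (hf.continuous.comp (by fun_prop)).continuousOn)
    (fun s _ p _ => hasDerivAt_comp_add_ofReal_smul (hf.differentiable one_ne_zero _))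
    (((hf.continuous_fderiv one_ne_zero).comp (by fun_prop)).clm_apply (by fun_prop)).continuousOn
    (fun s hs => hW.setIntegral_fderiv_comp_add_smul hf Z (by exact_mod_cast hs.1.ne'))
  simpa using homotopy

lemma setIntegral_mul_det_pow_div (hW : IsInvariantCycle ν K W) (hcont : Continuous W)
    (hK : IsCompact K) {f : Matrix n n ℂ → ℂ} (hf : ContDiff ℂ 1 f) {Z : Matrix n n ℂ}
    (hdet : ∀ t ∈ Icc (0 : ℝ) 1, ∀ p, (W p - (t : ℂ) • Z).det ≠ 0) :
    ∫ p in K, f (W p) / (W p - Z).det ^ Fintype.card n * (W p).det ^ Fintype.card n ∂ν =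
      ν.real K * f Z := by
  have hdetW (p : T) : (W p).det ≠ 0 := by simpa using hdet 0 (by simp) p
  set k : Matrix n n ℂ → ℂ := fun Y => f (Z + Y) / Y.det ^ Fintype.card n
  have hk (t : ℝ) (ht : t ∈ Icc 0 1) (p : T) : ContDiffAt ℂ 1 k (W p + (t : ℂ) • -Z) := by
    have := hdet t ht p
    rw [sub_eq_add_neg, ← smul_neg] at this
    exact ContDiffAt.div (by fun_prop) (contDiff_det.contDiffAt.pow _) (pow_ne_zero _ this)
  have hk_cont (t : ℝ) (ht : t ∈ Icc 0 1) : Continuous fun p => k (W p + (t : ℂ) • -Z) :=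
    continuous_iff_continuousAt.2 fun p =>
      ContinuousAt.comp (f := fun p => W p + (t : ℂ) • -Z) (hk t ht p).continuousAt (by fun_prop)
  have hflat (t : ℝ) (ht : t ∈ Icc 0 1) : ∫ p in K,
      fderiv ℂ k (W p + (t : ℂ) • -Z) (-Z) * (W p).det ^ Fintype.card n ∂ν = 0 := by
    have h := hW.setIntegral_fderiv_mul_det_pow hcont hK hdetW
      (g := fun B => k (B + (t : ℂ) • -Z))
      (fun p => (hk t ht p).comp (W p) (contDiffAt_id.add contDiffAt_const)) (-Z)
    simpa only [fderiv_comp_add_right] using h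
  have homotopy := setIntegral_eq_of_setIntegral_hasDerivAt_eq_zero (ν := ν) hK zero_le_one
    (g := fun t p => k (W p + (t : ℂ) • -Z) * (W p).det ^ Fintype.card n)
    (fun t ht => ((hk_cont t ht).mul (by fun_prop)).continuousOn)
    (fun t ht p _ => (hasDerivAt_comp_add_ofReal_smul
      ((hk t ht p).differentiableAt one_ne_zero)).mul_const _)
    (((continuousOn_fderiv_comp (by fun_prop) fun q hq => hk q.1 hq.1 q.2).clm_apply
      continuousOn_const).mul (by fun_prop))
    (fun t ht => hflat t (Ioc_subset_Icc_self ht))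
  calc _ = ∫ p in K, k (W p + ((1 : ℝ) : ℂ) • -Z) * (W p).det ^ Fintype.card n ∂ν := by
        simp [k, sub_eq_add_neg]
    _ = ∫ p in K, k (W p + ((0 : ℝ) : ℂ) • -Z) * (W p).det ^ Fintype.card n ∂ν := homotopy
    _ = ∫ p in K, f (Z + W p) ∂ν := by simp [k, hdetW]
    _ = _ := hW.setIntegral_comp_add hcont hK hf Z

end IsInvariantCycle

end InvariantCycle

section EulerAngles
open Matrix
open scoped Matrix.Norms.L2Operator

lemma hasDerivAt_matrix {𝕜 F m n : Type*} [NontriviallyNormedField 𝕜] [NormedAddCommGroup F]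
    [NormedSpace 𝕜 F] [Finite n] {M : 𝕜 → Matrix m n F} {M' : Matrix m n F} {x : 𝕜} :
    HasDerivAt M M' x ↔ ∀ i j, HasDerivAt (fun y => M y i j) (M' i j) x :=
  have := Fintype.ofFinite n
  hasDerivAt_pi.trans (forall_congr' fun _ => hasDerivAt_pi)

/-- The diagonal Euler factor `exp (i x σ₃ / 2)`. -/
def eulerPhase (x : ℝ) : Matrix (Fin 2) (Fin 2) ℂ :=
  diagonal ![Complex.exp (Complex.I * x / 2), Complex.exp (-(Complex.I * x / 2))]

/-- The middle Euler factor `exp (i θ σ₁ / 2)`. -/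
def eulerTilt (θ : ℝ) : Matrix (Fin 2) (Fin 2) ℂ :=
  !![Complex.cos (θ / 2), Complex.I * Complex.sin (θ / 2);
    Complex.I * Complex.sin (θ / 2), Complex.cos (θ / 2)]

/-- The third Pauli matrix `σ₃`. -/
def pauliZ : Matrix (Fin 2) (Fin 2) ℂ := diagonal ![1, -1]

lemma Wparam_eq_smul_mul (R α φ θ ψ : ℝ) : Wparam R α φ θ ψ =
    (R * Complex.exp (Complex.I * α)) • (eulerPhase φ * eulerTilt θ * eulerPhase ψ) := by
  rw [Wparam]
  congr 1
  ext i j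
  fin_cases i <;> fin_cases j <;>
    simp [eulerPhase, eulerTilt, mul_add, mul_sub, add_div, sub_div, neg_div, Complex.exp_add,
      Complex.exp_sub, Complex.exp_neg] <;> ring

lemma hasDerivAt_eulerPhase (x : ℝ) :
    HasDerivAt eulerPhase ((Complex.I / 2) • (pauliZ * eulerPhase x)) x := by
  have hphase : HasDerivAt (fun y : ℝ => Complex.I * y / 2) (Complex.I / 2) x := by
    simpa using (Complex.ofRealCLM.hasDerivAt.const_mul Complex.I).div_const 2
  refine hasDerivAt_matrix.2 fun i j => ?_
  fin_cases i <;> fin_cases j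
  · simpa [eulerPhase, pauliZ, mul_comm] using hphase.cexp
  · simpa [eulerPhase, pauliZ] using hasDerivAt_const x (0 : ℂ)
  · simpa [eulerPhase, pauliZ] using hasDerivAt_const x (0 : ℂ)
  · simpa [eulerPhase, pauliZ, mul_comm] using hphase.neg.cexp

lemma hasDerivAt_eulerTilt (θ : ℝ) :
    HasDerivAt eulerTilt ((1 / 2 : ℂ) • eulerTilt (θ + Real.pi)) θ := by
  have hangle : HasDerivAt (fun y : ℂ => y / 2) (1 / 2) θ := (hasDerivAt_id _).div_const 2
  have hcos := hangle.ccos.comp_ofReal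
  have hsin := (hangle.csin.const_mul Complex.I).comp_ofReal
  refine hasDerivAt_matrix.2 fun i j => ?_
  have hmid : eulerTilt (θ + Real.pi) = !![-Complex.sin (θ / 2), Complex.I * Complex.cos (θ / 2);
      Complex.I * Complex.cos (θ / 2), -Complex.sin (θ / 2)] := by
    simp [eulerTilt, add_div, Complex.sin_add_pi_div_two, Complex.cos_add_pi_div_two]
  rw [hmid]
  fin_cases i <;> fin_cases j
  · exact hcos.congr_deriv (by simp; ring)
  · exact hsin.congr_deriv (by simp; ring)
  · exact hsin.congr_deriv (by simp; ring)
  · exact hcos.congr_deriv (by simp; ring)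

lemma pauliZ_mul_eulerPhase (x : ℝ) : pauliZ * eulerPhase x = eulerPhase x * pauliZ := by
  simp [pauliZ, eulerPhase, mul_comm]

lemma hasDerivAt_Wparam_alpha (R α φ θ ψ : ℝ) :
    HasDerivAt (fun α => Wparam R α φ θ ψ) (Complex.I • Wparam R α φ θ ψ) α := by
  have hphase : HasDerivAt (fun y : ℝ => (R : ℂ) * Complex.exp (Complex.I * y))
      (Complex.I * (R * Complex.exp (Complex.I * α))) α := by
    have := ((Complex.ofRealCLM.hasDerivAt (x := α)).const_mul Complex.I).cexp.const_mul (R : ℂ)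
    simpa [mul_comm, mul_left_comm] using this
  simp only [Wparam_eq_smul_mul, smul_smul]
  exact hphase.smul_const _

lemma hasDerivAt_Wparam_phi (R α φ θ ψ : ℝ) :
    HasDerivAt (fun φ => Wparam R α φ θ ψ) ((Complex.I / 2) • (pauliZ * Wparam R α φ θ ψ)) φ := by
  simp only [Wparam_eq_smul_mul]
  refine ((((hasDerivAt_eulerPhase φ).mul_const (eulerTilt θ)).mul_const
    (eulerPhase ψ)).const_smul ((R : ℂ) * Complex.exp (Complex.I * α))).congr_deriv ?_
  simp only [mul_smul_comm, smul_mul_assoc, mul_assoc, smul_comm (Complex.I / 2)]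

lemma hasDerivAt_Wparam_theta (R α φ θ ψ : ℝ) :
    HasDerivAt (fun θ => Wparam R α φ θ ψ) ((1 / 2 : ℂ) • Wparam R α φ (θ + Real.pi) ψ) θ := by
  simp only [Wparam_eq_smul_mul]
  refine ((((hasDerivAt_eulerTilt θ).const_mul (eulerPhase φ)).mul_const
    (eulerPhase ψ)).const_smul ((R : ℂ) * Complex.exp (Complex.I * α))).congr_deriv ?_
  simp only [mul_smul_comm, smul_mul_assoc, mul_assoc, smul_comm (1 / 2 : ℂ)]

lemma hasDerivAt_Wparam_psi (R α φ θ ψ : ℝ) :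
    HasDerivAt (fun ψ => Wparam R α φ θ ψ) ((Complex.I / 2) • (Wparam R α φ θ ψ * pauliZ)) ψ := by
  simp only [Wparam_eq_smul_mul]
  refine (((hasDerivAt_eulerPhase ψ).const_mul (eulerPhase φ * eulerTilt θ)).const_smul
    ((R : ℂ) * Complex.exp (Complex.I * α))).congr_deriv ?_
  simp only [mul_smul_comm, smul_mul_assoc, mul_assoc, smul_comm (Complex.I / 2),
    pauliZ_mul_eulerPhase]

lemma det_Wparam (R α φ θ ψ : ℝ) :
    (Wparam R α φ θ ψ).det = R ^ 2 * Complex.exp (2 * Complex.I * α) := by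
  have hphase (x : ℝ) : (eulerPhase x).det = 1 := by
    simp [eulerPhase, ← Complex.exp_add]
  have htilt : (eulerTilt θ).det = 1 := by
    rw [eulerTilt, det_fin_two_of]
    linear_combination Complex.cos_sq_add_sin_sq (θ / 2) - Complex.sin (θ / 2) ^ 2 * Complex.I_sq
  rw [Wparam_eq_smul_mul, det_smul, det_mul, det_mul, hphase, hphase, htilt, mul_assoc 2,
    two_mul, Complex.exp_add, Fintype.card_fin]
  ring

lemma Wparam_mul_conjTranspose (R α φ θ ψ : ℝ) :
    Wparam R α φ θ ψ * (Wparam R α φ θ ψ)ᴴ = ((R ^ 2 : ℝ) : ℂ) • 1 := by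
  have hphase (x : ℝ) : eulerPhase x * (eulerPhase x)ᴴ = 1 := by
    ext i j
    fin_cases i <;> fin_cases j <;>
      simp [eulerPhase, ← Complex.exp_add, ← Complex.exp_conj, map_ofNat, neg_div]
  have htilt : eulerTilt θ * (eulerTilt θ)ᴴ = 1 := by
    have hcos : (starRingEnd ℂ) (Complex.cos (θ / 2)) = Complex.cos (θ / 2) := by
      simp [← Complex.cos_conj, map_ofNat]
    have hsin : (starRingEnd ℂ) (Complex.sin (θ / 2)) = Complex.sin (θ / 2) := by
      simp [← Complex.sin_conj, map_ofNat]
    ext i j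
    fin_cases i <;> fin_cases j <;>
      simp [eulerTilt, Matrix.mul_apply, hcos, hsin] <;>
      grind [Complex.cos_sq_add_sin_sq (θ / 2), Complex.I_sq]
  have hscalar : (R * Complex.exp (Complex.I * α)) * star (R * Complex.exp (Complex.I * α)) =
      ((R ^ 2 : ℝ) : ℂ) := by
    rw [RCLike.star_def, Complex.mul_conj']
    simp [mul_comm Complex.I, Complex.norm_exp_ofReal_mul_I, ← Complex.ofReal_pow]
  rw [Wparam_eq_smul_mul, conjTranspose_smul, smul_mul_smul_comm, hscalar, conjTranspose_mul,
    conjTranspose_mul]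
  congr 1
  calc _ = eulerPhase φ * (eulerTilt θ * (eulerPhase ψ * (eulerPhase ψ)ᴴ) * (eulerTilt θ)ᴴ) *
        (eulerPhase φ)ᴴ := by simp only [mul_assoc]
    _ = 1 := by simp only [hphase, htilt, mul_one]

lemma sin_smul_eulerTilt_mul (θ : ℝ) (Y : Matrix (Fin 2) (Fin 2) ℂ) :
    Complex.sin θ • (eulerTilt θ * Y) =
      (-Complex.I * ((Y 0 0 + Y 1 1) / 2) * Complex.sin θ) • Complex.I • eulerTilt θ
      + (Y 1 0 - Y 0 1) • (Complex.I / 2) • (pauliZ * eulerTilt θ)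
      + (-Complex.I * Complex.sin θ * (Y 0 1 + Y 1 0)) • (1 / 2 : ℂ) • eulerTilt (θ + Real.pi)
      + (-Complex.I * (Y 0 0 - Y 1 1) * Complex.sin θ + Complex.cos θ * (Y 0 1 - Y 1 0)) •
          (Complex.I / 2) • (eulerTilt θ * pauliZ) := by
  have hsin : Complex.sin θ = 2 * Complex.sin (θ / 2) * Complex.cos (θ / 2) := by
    rw [← Complex.sin_two_mul]; ring_nf
  have hcos : Complex.cos θ = Complex.cos (θ / 2) ^ 2 - Complex.sin (θ / 2) ^ 2 := by
    rw [← Complex.cos_two_mul']; ring_nf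
  have hsq := Complex.cos_sq_add_sin_sq (θ / 2)
  have hI := Complex.I_sq
  have hZ : pauliZ = !![1, 0; 0, -1] := by
    ext i j; fin_cases i <;> fin_cases j <;> simp [pauliZ]
  rw [eta_fin_two Y, eulerTilt, eulerTilt, hZ]
  simp only [Complex.ofReal_add, add_div, Complex.sin_add_pi_div_two, Complex.cos_add_pi_div_two,
    hsin, hcos]
  ext i j
  fin_cases i <;> fin_cases j <;>
    simp <;> grind

lemma eulerPhase_mul (ψ : ℝ) (X : Matrix (Fin 2) (Fin 2) ℂ) :
    eulerPhase ψ * X = !![X 0 0, Complex.exp (Complex.I * ψ) * X 0 1;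
      Complex.exp (-(Complex.I * ψ)) * X 1 0, X 1 1] * eulerPhase ψ := by
  have hsq : Complex.exp (Complex.I * ψ) = Complex.exp (Complex.I * ψ / 2) ^ 2 := by
    rw [← Complex.exp_nat_mul]; congr 1; push_cast; ring
  ext i j
  fin_cases i <;> fin_cases j <;> simp [eulerPhase, hsq, Complex.exp_neg] <;> field_simp

/-- The `∂/∂α` component of `sin θ` times the left-invariant field `W ↦ W X`, as a function of
`(θ, ψ)`. -/
def alphaCoeff (X : Matrix (Fin 2) (Fin 2) ℂ) (q : ℝ × ℝ) : ℂ :=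
  -Complex.I * ((X 0 0 + X 1 1) / 2) * Complex.sin q.1

/-- The `∂/∂φ` component of `sin θ` times the left-invariant field `W ↦ W X`, as a function of
`(θ, ψ)`. -/
def phiCoeff (X : Matrix (Fin 2) (Fin 2) ℂ) (q : ℝ × ℝ) : ℂ :=
  Complex.exp (-(Complex.I * q.2)) * X 1 0 - Complex.exp (Complex.I * q.2) * X 0 1

/-- The `∂/∂θ` component of `sin θ` times the left-invariant field `W ↦ W X`, as a function of
`(θ, ψ)`. -/
def thetaCoeff (X : Matrix (Fin 2) (Fin 2) ℂ) (q : ℝ × ℝ) : ℂ :=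
  -Complex.I * Complex.sin q.1 *
    (Complex.exp (Complex.I * q.2) * X 0 1 + Complex.exp (-(Complex.I * q.2)) * X 1 0)

/-- The `∂/∂ψ` component of `sin θ` times the left-invariant field `W ↦ W X`, as a function of
`(θ, ψ)`. -/
def psiCoeff (X : Matrix (Fin 2) (Fin 2) ℂ) (q : ℝ × ℝ) : ℂ :=
  -Complex.I * (X 0 0 - X 1 1) * Complex.sin q.1 + Complex.cos q.1 *
    (Complex.exp (Complex.I * q.2) * X 0 1 - Complex.exp (-(Complex.I * q.2)) * X 1 0)

lemma sin_smul_Wparam_mul (R α φ θ ψ : ℝ) (X : Matrix (Fin 2) (Fin 2) ℂ) :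
    Complex.sin θ • (Wparam R α φ θ ψ * X) =
      alphaCoeff X (θ, ψ) • Complex.I • Wparam R α φ θ ψ
      + phiCoeff X (θ, ψ) • (Complex.I / 2) • (pauliZ * Wparam R α φ θ ψ)
      + thetaCoeff X (θ, ψ) • (1 / 2 : ℂ) • Wparam R α φ (θ + Real.pi) ψ
      + psiCoeff X (θ, ψ) • (Complex.I / 2) • (Wparam R α φ θ ψ * pauliZ) := by
  let Y : Matrix (Fin 2) (Fin 2) ℂ := !![X 0 0, Complex.exp (Complex.I * ψ) * X 0 1;
    Complex.exp (-(Complex.I * ψ)) * X 1 0, X 1 1]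
  let sandwich : Matrix (Fin 2) (Fin 2) ℂ →ₗ[ℂ] Matrix (Fin 2) (Fin 2) ℂ :=
    (R * Complex.exp (Complex.I * α)) • LinearMap.mulLeftRight ℂ (eulerPhase φ, eulerPhase ψ)
  have sandwich_tilt (θ : ℝ) : sandwich (eulerTilt θ) = Wparam R α φ θ ψ := by
    simp [sandwich, Wparam_eq_smul_mul]
  have sandwich_tilt_mul : sandwich (eulerTilt θ * Y) = Wparam R α φ θ ψ * X := by
    simp [sandwich, Wparam_eq_smul_mul, mul_assoc, eulerPhase_mul ψ X, Y]
  have sandwich_mul_tilt : sandwich (pauliZ * eulerTilt θ) = pauliZ * Wparam R α φ θ ψ := by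
    simp [sandwich, Wparam_eq_smul_mul, ← mul_assoc, pauliZ_mul_eulerPhase]
  have sandwich_tilt_mul_pauliZ :
      sandwich (eulerTilt θ * pauliZ) = Wparam R α φ θ ψ * pauliZ := by
    simp [sandwich, Wparam_eq_smul_mul, mul_assoc, pauliZ_mul_eulerPhase]
  have htilt := congrArg sandwich (sin_smul_eulerTilt_mul θ Y)
  simp only [map_add, map_smul, sandwich_tilt, sandwich_tilt_mul, sandwich_mul_tilt,
    sandwich_tilt_mul_pauliZ] at htilt
  exact htilt

end EulerAngles

section EulerCycle
open MeasureTheory Matrix Set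
open scoped Matrix.Norms.L2Operator

lemma eulerPhase_add_two_pi (x : ℝ) : eulerPhase (x + 2 * Real.pi) = -eulerPhase x := by
  have hhalf : Complex.I * ((x + 2 * Real.pi : ℝ) : ℂ) / 2 =
      Complex.I * x / 2 + Real.pi * Complex.I := by push_cast; ring
  rw [eulerPhase, eulerPhase, hhalf, neg_add, Complex.exp_add, Complex.exp_add, Complex.exp_neg
    (Real.pi * Complex.I), Complex.exp_pi_mul_I]
  ext i j
  fin_cases i <;> fin_cases j <;> simp

lemma Wparam_alpha_add_pi (R α φ θ ψ : ℝ) :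
    Wparam R (α + Real.pi) φ θ ψ = -Wparam R α φ θ ψ := by
  have hphase :
      Complex.exp (Complex.I * ((α + Real.pi : ℝ) : ℂ)) = -Complex.exp (Complex.I * α) := by
    rw [Complex.ofReal_add, mul_add, Complex.exp_add, mul_comm _ (Real.pi : ℂ),
      Complex.exp_pi_mul_I, mul_neg_one]
  simp only [Wparam_eq_smul_mul, hphase, mul_neg, neg_smul]

lemma Wparam_phi_add_two_pi (R α φ θ ψ : ℝ) :
    Wparam R α (φ + 2 * Real.pi) θ ψ = -Wparam R α φ θ ψ := by
  simp only [Wparam_eq_smul_mul, eulerPhase_add_two_pi, neg_mul, smul_neg]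

lemma Wparam_psi_add_two_pi (R α φ θ ψ : ℝ) :
    Wparam R α φ θ (ψ + 2 * Real.pi) = -Wparam R α φ θ ψ := by
  simp only [Wparam_eq_smul_mul, eulerPhase_add_two_pi, mul_neg, smul_neg]

/-- The parametrization `Wparam` of `U(2)_R` as a map of the tuple `(α, φ, θ, ψ)`. -/
def eulerCycle (R : ℝ) (p : ℝ × ℝ × ℝ × ℝ) : Matrix (Fin 2) (Fin 2) ℂ :=
  Wparam R p.1 p.2.1 p.2.2.1 p.2.2.2

/-- The closed parameter box of the Euler angles `(α, φ, θ, ψ)`. -/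
def eulerBox : Set (ℝ × ℝ × ℝ × ℝ) :=
  Icc 0 Real.pi ×ˢ Icc 0 (2 * Real.pi) ×ˢ Icc 0 Real.pi ×ˢ Icc (-(2 * Real.pi)) (2 * Real.pi)

/-- The invariant measure `sin θ dα dφ dθ dψ` in Euler angles; the density is truncated to `0`
where `sin θ < 0`, which does not happen on `eulerBox`. -/
def eulerMeasure : Measure (ℝ × ℝ × ℝ × ℝ) :=
  volume.withDensity fun p => ENNReal.ofReal (Real.sin p.2.2.1)

lemma isCompact_eulerBox : IsCompact eulerBox :=
  isCompact_Icc.prod (isCompact_Icc.prod (isCompact_Icc.prod isCompact_Icc))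

instance isLocallyFiniteMeasure_eulerMeasure : IsLocallyFiniteMeasure eulerMeasure :=
  IsLocallyFiniteMeasure.withDensity_ofReal (by fun_prop)

instance sFinite_eulerMeasure : SFinite eulerMeasure := by
  unfold eulerMeasure; infer_instance

lemma continuous_eulerCycle (R : ℝ) : Continuous (eulerCycle R) := by
  have hphase : Continuous eulerPhase :=
    continuous_iff_continuousAt.2 fun x => (hasDerivAt_eulerPhase x).continuousAt
  have htilt : Continuous eulerTilt :=
    continuous_iff_continuousAt.2 fun x => (hasDerivAt_eulerTilt x).continuousAt
  unfold eulerCycle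
  simp only [Wparam_eq_smul_mul]
  fun_prop

lemma setIntegral_eulerBox {F : ℝ × ℝ × ℝ × ℝ → ℂ} (hF : Continuous F) :
    ∫ p in eulerBox, F p = ∫ α in (0 : ℝ)..Real.pi, ∫ φ in (0 : ℝ)..(2 * Real.pi),
      ∫ θ in (0 : ℝ)..Real.pi, ∫ ψ in (-(2 * Real.pi))..(2 * Real.pi), F (α, φ, θ, ψ) := by
  have hπ := Real.pi_pos.le
  have h2π : 0 ≤ 2 * Real.pi := by positivity
  have tilt_compact : IsCompact (Icc 0 Real.pi ×ˢ Icc (-(2 * Real.pi)) (2 * Real.pi)) :=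
    isCompact_Icc.prod isCompact_Icc
  rw [eulerBox, Measure.volume_eq_prod,
    setIntegral_Icc_prod (isCompact_Icc.prod tilt_compact) hπ hF.continuousOn]
  congr! 2 with α
  rw [Measure.volume_eq_prod, setIntegral_Icc_prod tilt_compact h2π (by fun_prop)]
  congr! 2 with φ
  rw [Measure.volume_eq_prod, setIntegral_Icc_prod isCompact_Icc hπ (by fun_prop)]
  congr! 2 with θ
  rw [integral_Icc_eq_integral_Ioc, ← intervalIntegral.integral_of_le (by linarith)]

lemma setIntegral_eulerMeasure (F : ℝ × ℝ × ℝ × ℝ → ℂ) :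
    ∫ p in eulerBox, F p ∂eulerMeasure = ∫ p in eulerBox, Complex.sin p.2.2.1 * F p := by
  rw [eulerMeasure, setIntegral_withDensity_eq_setIntegral_toReal_smul (by fun_prop)
    (by simp) _ isCompact_eulerBox.measurableSet]
  refine setIntegral_congr_fun isCompact_eulerBox.measurableSet fun p hp => ?_
  rw [ENNReal.toReal_ofReal (Real.sin_nonneg_of_mem_Icc hp.2.2.1), Complex.real_smul,
    Complex.ofReal_sin]

lemma eulerMeasure_real_eulerBox : eulerMeasure.real eulerBox = 16 * Real.pi ^ 3 := by
  have hsin : ∫ θ in (0 : ℝ)..Real.pi, Complex.sin θ = 2 := by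
    norm_num [← Complex.ofReal_sin, intervalIntegral.integral_ofReal]
  have hvol : (eulerMeasure.real eulerBox : ℂ) = ((16 * Real.pi ^ 3 : ℝ) : ℂ) := by
    calc (eulerMeasure.real eulerBox : ℂ) = ∫ _ in eulerBox, (1 : ℂ) ∂eulerMeasure := by simp
      _ = _ := by
        rw [setIntegral_eulerMeasure, setIntegral_eulerBox (by fun_prop)]
        simp only [mul_one, intervalIntegral.integral_const, Complex.real_smul,
          intervalIntegral.integral_const_mul, hsin]
        push_cast
        ring
  exact_mod_cast hvol

lemma U2int_eq_setIntegral (R : ℝ) {g : Matrix (Fin 2) (Fin 2) ℂ → ℂ}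
    (hg : Continuous fun p => g (eulerCycle R p)) : U2int R g = (8 * Complex.I)⁻¹ *
      ∫ p in eulerBox, g (eulerCycle R p) * (eulerCycle R p).det ^ 2 ∂eulerMeasure := by
  have hdet : Continuous fun p => (eulerCycle R p).det ^ 2 :=
    (Continuous.matrix_det (continuous_eulerCycle R)).pow 2
  have hexp (α : ℝ) : Complex.exp (4 * Complex.I * α) = Complex.exp (2 * Complex.I * α) ^ 2 := by
    rw [← Complex.exp_nat_mul]; congr 1; push_cast; ring
  have integrand (α φ θ ψ : ℝ) : g (Wparam R α φ θ ψ) * ((R : ℂ) ^ 4 / (8 * Complex.I)) *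
      Complex.exp (4 * Complex.I * α) * (Real.sin θ : ℂ) = (8 * Complex.I)⁻¹ * (Complex.sin θ *
        (g (Wparam R α φ θ ψ) * (Wparam R α φ θ ψ).det ^ 2)) := by
    rw [det_Wparam, hexp, Complex.ofReal_sin]
    ring
  have hcont : Continuous fun p : ℝ × ℝ × ℝ × ℝ => Complex.sin p.2.2.1 *
      (g (eulerCycle R p) * (eulerCycle R p).det ^ 2) := .mul (by fun_prop) (hg.mul hdet)
  rw [setIntegral_eulerMeasure, setIntegral_eulerBox hcont]
  simp only [← intervalIntegral.integral_const_mul, U2int, integrand, eulerCycle]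

/-- A continuous integrand on the Euler angles whose integral over `eulerBox` vanishes. Continuity
is part of the notion so that it is stable under sums. -/
structure IntegratesToZero (F : ℝ × ℝ × ℝ × ℝ → ℂ) : Prop where
  continuous : Continuous F
  setIntegral_eq_zero : ∫ p in eulerBox, F p = 0

lemma IntegratesToZero.add {F G : ℝ × ℝ × ℝ × ℝ → ℂ} (hF : IntegratesToZero F)
    (hG : IntegratesToZero G) : IntegratesToZero fun p => F p + G p where
  continuous := hF.continuous.add hG.continuous
  setIntegral_eq_zero := by
    rw [integral_add (hF.continuous.continuousOn.integrableOn_compact isCompact_eulerBox)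
      (hG.continuous.continuousOn.integrableOn_compact isCompact_eulerBox),
      hF.setIntegral_eq_zero, hG.setIntegral_eq_zero, add_zero]

section CoordinateDerivatives

variable {R : ℝ} {h : Matrix (Fin 2) (Fin 2) ℂ → ℂ} {ω ω' : ℝ × ℝ → ℂ}

lemma continuous_comp_eulerCycle (hh : ∀ p, ContDiffAt ℂ 1 h (eulerCycle R p)) :
    Continuous fun p => h (eulerCycle R p) :=
  continuous_iff_continuousAt.2 fun p =>
    (hh p).continuousAt.comp (continuous_eulerCycle R).continuousAt

lemma continuous_mul_fderiv_eulerCycle (hh : ∀ p, ContDiffAt ℂ 1 h (eulerCycle R p))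
    (hω : Continuous ω) {V : ℝ × ℝ × ℝ × ℝ → Matrix (Fin 2) (Fin 2) ℂ} (hV : Continuous V) :
    Continuous fun p => ω p.2.2 * fderiv ℂ h (eulerCycle R p) (V p) := by
  have hfderiv : Continuous fun p => fderiv ℂ h (eulerCycle R p) := continuousOn_univ.1 <|
    continuousOn_fderiv_comp (continuous_eulerCycle R).continuousOn fun p _ => hh p
  exact (hω.comp (by fun_prop)).mul (hfderiv.clm_apply hV)

lemma continuous_deriv_mul_comp_eulerCycle (hh : ∀ p, ContDiffAt ℂ 1 h (eulerCycle R p))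
    (hω : Continuous ω) (hω' : Continuous ω') {V : ℝ × ℝ × ℝ × ℝ → Matrix (Fin 2) (Fin 2) ℂ}
    (hV : Continuous V) : Continuous fun p =>
      ω' p.2.2 * h (eulerCycle R p) + ω p.2.2 * fderiv ℂ h (eulerCycle R p) (V p) :=
  ((hω'.comp (by fun_prop)).mul (continuous_comp_eulerCycle hh)).add
    (continuous_mul_fderiv_eulerCycle hh hω hV)

lemma continuous_Wparam_theta_add (R c : ℝ) : Continuous fun p : ℝ × ℝ × ℝ × ℝ =>
    Wparam R p.1 p.2.1 (p.2.2.1 + c) p.2.2.2 :=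
  (continuous_eulerCycle R).comp (f := fun p : ℝ × ℝ × ℝ × ℝ =>
    (p.1, p.2.1, p.2.2.1 + c, p.2.2.2)) (by fun_prop)

lemma setIntegral_psi_mul_comp_neg_sub (hh : ∀ p, ContDiffAt ℂ 1 h (eulerCycle R p))
    (hω : Continuous ω) (hper : ∀ θ ψ, ω (θ, ψ + 2 * Real.pi) = ω (θ, ψ)) (α φ θ : ℝ) :
    ∫ ψ in Icc (-(2 * Real.pi)) (2 * Real.pi),
      (ω (θ, ψ) * h (-Wparam R α φ θ ψ) - ω (θ, ψ) * h (Wparam R α φ θ ψ)) = 0 := by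
  have hcont : Continuous fun ψ => ω (θ, ψ) * h (Wparam R α φ θ ψ) :=
    (hω.comp (by fun_prop)).mul ((continuous_comp_eulerCycle hh).comp
      (f := fun ψ => (α, φ, θ, ψ)) (by fun_prop))
  have hshift := setIntegral_Icc_shift_sub_eq_zero hcont Real.two_pi_pos.le (fun ψ => by
    rw [two_mul, ← add_assoc]
    simp only [hper, Wparam_psi_add_two_pi, neg_neg])
  simpa only [hper, Wparam_psi_add_two_pi] using hshift

lemma integratesToZero_deriv_alpha (hh : ∀ p, ContDiffAt ℂ 1 h (eulerCycle R p))
    (hω : Continuous ω) (hper : ∀ θ ψ, ω (θ, ψ + 2 * Real.pi) = ω (θ, ψ)) :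
    IntegratesToZero fun p =>
      ω p.2.2 * fderiv ℂ h (eulerCycle R p) (Complex.I • eulerCycle R p) := by
  have hcont := continuous_mul_fderiv_eulerCycle hh hω
    ((continuous_eulerCycle R).fun_const_smul Complex.I)
  refine ⟨hcont, ?_⟩
  have hderiv (α : ℝ) (p : ℝ × ℝ × ℝ) :
      HasDerivAt (fun α => ω p.2 * h (eulerCycle R (α, p)))
        (ω p.2 * fderiv ℂ h (eulerCycle R (α, p)) (Complex.I • eulerCycle R (α, p))) α := by
    have := hasDerivAt_mul_comp (hasDerivAt_const α (ω p.2))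
      ((hh (α, p)).differentiableAt one_ne_zero) (hasDerivAt_Wparam_alpha R α p.1 p.2.1 p.2.2)
    rwa [zero_mul, zero_add] at this
  refine (setIntegral_Icc_prod_of_hasDerivAt (isCompact_Icc.prod (isCompact_Icc.prod isCompact_Icc))
    Real.pi_pos.le (G := fun p => ω p.2.2 * h (eulerCycle R p)) hderiv hcont).trans ?_
  refine setIntegral_prod_eq_zero fun φ => setIntegral_prod_eq_zero fun θ => ?_
  have := setIntegral_psi_mul_comp_neg_sub hh hω hper 0 φ θ
  simpa only [← Wparam_alpha_add_pi, zero_add, eulerCycle] using this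

lemma integratesToZero_deriv_phi (hh : ∀ p, ContDiffAt ℂ 1 h (eulerCycle R p))
    (hω : Continuous ω) (hper : ∀ θ ψ, ω (θ, ψ + 2 * Real.pi) = ω (θ, ψ)) :
    IntegratesToZero fun p => ω p.2.2 *
      fderiv ℂ h (eulerCycle R p) ((Complex.I / 2) • (pauliZ * eulerCycle R p)) := by
  have hcont := continuous_mul_fderiv_eulerCycle hh hω
    (((continuous_eulerCycle R).const_mul pauliZ).fun_const_smul (Complex.I / 2))
  refine ⟨hcont, ?_⟩
  refine setIntegral_prod_eq_zero fun α => ?_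
  have hderiv (φ : ℝ) (p : ℝ × ℝ) : HasDerivAt (fun φ => ω p * h (eulerCycle R (α, φ, p)))
      (ω p * fderiv ℂ h (eulerCycle R (α, φ, p))
        ((Complex.I / 2) • (pauliZ * eulerCycle R (α, φ, p)))) φ := by
    have := hasDerivAt_mul_comp (hasDerivAt_const φ (ω p))
      ((hh (α, φ, p)).differentiableAt one_ne_zero) (hasDerivAt_Wparam_phi R α φ p.1 p.2)
    rwa [zero_mul, zero_add] at this
  refine (setIntegral_Icc_prod_of_hasDerivAt (isCompact_Icc.prod isCompact_Icc)
    Real.two_pi_pos.le (G := fun p => ω p.2 * h (eulerCycle R (α, p))) hderiv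
    (hcont.comp (by fun_prop))).trans ?_
  refine setIntegral_prod_eq_zero fun θ => ?_
  have := setIntegral_psi_mul_comp_neg_sub hh hω hper α 0 θ
  simpa only [← Wparam_phi_add_two_pi, zero_add, eulerCycle] using this

lemma integratesToZero_deriv_theta (hh : ∀ p, ContDiffAt ℂ 1 h (eulerCycle R p))
    (hω : Continuous ω) (hω' : Continuous ω')
    (hdω : ∀ θ ψ, HasDerivAt (fun θ => ω (θ, ψ)) (ω' (θ, ψ)) θ)
    (hzero : ∀ ψ, ω (0, ψ) = 0) (hpi : ∀ ψ, ω (Real.pi, ψ) = 0) :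
    IntegratesToZero fun p => ω' p.2.2 * h (eulerCycle R p) + ω p.2.2 *
      fderiv ℂ h (eulerCycle R p)
        ((1 / 2 : ℂ) • Wparam R p.1 p.2.1 (p.2.2.1 + Real.pi) p.2.2.2) := by
  have hcont := continuous_deriv_mul_comp_eulerCycle hh hω hω'
    ((continuous_Wparam_theta_add R Real.pi).fun_const_smul (1 / 2 : ℂ))
  refine ⟨hcont, ?_⟩
  refine setIntegral_prod_eq_zero fun α => setIntegral_prod_eq_zero fun φ => ?_
  refine (setIntegral_Icc_prod_of_hasDerivAt isCompact_Icc Real.pi_pos.le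
    (G := fun p => ω p * h (eulerCycle R (α, φ, p)))
    (fun θ ψ => hasDerivAt_mul_comp (hdω θ ψ) ((hh (α, φ, θ, ψ)).differentiableAt one_ne_zero)
      (hasDerivAt_Wparam_theta R α φ θ ψ)) (hcont.comp (by fun_prop))).trans ?_
  simp only [hzero, hpi, zero_mul, sub_self, integral_zero]

lemma integratesToZero_deriv_psi (hh : ∀ p, ContDiffAt ℂ 1 h (eulerCycle R p))
    (hω : Continuous ω) (hω' : Continuous ω')
    (hdω : ∀ θ ψ, HasDerivAt (fun ψ => ω (θ, ψ)) (ω' (θ, ψ)) ψ)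
    (hper : ∀ θ ψ, ω (θ, ψ + 2 * Real.pi) = ω (θ, ψ)) :
    IntegratesToZero fun p => ω' p.2.2 * h (eulerCycle R p) + ω p.2.2 *
      fderiv ℂ h (eulerCycle R p) ((Complex.I / 2) • (eulerCycle R p * pauliZ)) := by
  have hcont := continuous_deriv_mul_comp_eulerCycle hh hω hω'
    (((continuous_eulerCycle R).mul_const pauliZ).fun_const_smul (Complex.I / 2))
  refine ⟨hcont, ?_⟩
  refine setIntegral_prod_eq_zero fun α => setIntegral_prod_eq_zero fun φ =>
    setIntegral_prod_eq_zero fun θ => ?_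
  rw [integral_Icc_eq_integral_Ioc, ← intervalIntegral.integral_of_le (by linarith [Real.pi_pos])]
  refine (intervalIntegral.integral_eq_sub_of_hasDerivAt
    (fun ψ _ => hasDerivAt_mul_comp (hdω θ ψ) ((hh (α, φ, θ, ψ)).differentiableAt one_ne_zero)
      (hasDerivAt_Wparam_psi R α φ θ ψ))
    ((hcont.comp (f := fun ψ => (α, φ, θ, ψ)) (by fun_prop)).intervalIntegrable _ _)).trans ?_
  have hperiodic : Function.Periodic (fun ψ => ω (θ, ψ) * h (Wparam R α φ θ ψ))
      (2 * Real.pi + 2 * Real.pi) := fun ψ => by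
    simp only [← add_assoc, hper, Wparam_psi_add_two_pi, neg_neg]
  have hends := hperiodic (-(2 * Real.pi))
  rw [neg_add_cancel_left] at hends
  exact sub_eq_zero.2 hends

end CoordinateDerivatives

lemma cexp_I_mul_add_two_pi (ψ : ℝ) :
    Complex.exp (Complex.I * ((ψ + 2 * Real.pi : ℝ) : ℂ)) = Complex.exp (Complex.I * ψ) := by
  rw [← Complex.exp_periodic (Complex.I * ψ)]
  congr 1; push_cast; ring

lemma hasDerivAt_thetaCoeff (X : Matrix (Fin 2) (Fin 2) ℂ) (θ ψ : ℝ) :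
    HasDerivAt (fun θ => thetaCoeff X (θ, ψ)) (-(Complex.I * Complex.cos θ *
      (Complex.exp (Complex.I * ψ) * X 0 1 + Complex.exp (-(Complex.I * ψ)) * X 1 0))) θ := by
  simp only [thetaCoeff]
  have hsin := (Complex.hasDerivAt_sin θ).comp_ofReal
  exact ((hsin.const_mul (-Complex.I)).mul_const _).congr_deriv (by ring)

lemma hasDerivAt_psiCoeff (X : Matrix (Fin 2) (Fin 2) ℂ) (θ ψ : ℝ) :
    HasDerivAt (fun ψ => psiCoeff X (θ, ψ)) (Complex.I * Complex.cos θ *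
      (Complex.exp (Complex.I * ψ) * X 0 1 + Complex.exp (-(Complex.I * ψ)) * X 1 0)) ψ := by
  simp only [psiCoeff]
  have hphase : HasDerivAt (fun ψ : ℝ => Complex.I * ψ) Complex.I ψ := by
    simpa using Complex.ofRealCLM.hasDerivAt.const_mul Complex.I
  refine ((((hphase.cexp.mul_const (X 0 1)).fun_sub
    (hphase.fun_neg.cexp.mul_const (X 1 0))).const_mul (Complex.cos θ)).const_add _).congr_deriv ?_
  ring

lemma isInvariantCycle_eulerCycle (R : ℝ) :
    IsInvariantCycle eulerMeasure eulerBox (eulerCycle R) := by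
  intro h hh X
  -- `∂_θ thetaCoeff = -κ` and `∂_ψ psiCoeff = κ`: the field `sin θ · W X` is divergence free.
  let κ : ℝ × ℝ → ℂ := fun q => Complex.I * Complex.cos q.1 *
    (Complex.exp (Complex.I * q.2) * X 0 1 + Complex.exp (-(Complex.I * q.2)) * X 1 0)
  have hκ : Continuous κ := by fun_prop
  have hα := integratesToZero_deriv_alpha hh (ω := alphaCoeff X)
    (by unfold alphaCoeff; fun_prop) (fun θ ψ => rfl)
  have hφ := integratesToZero_deriv_phi hh (ω := phiCoeff X) (by unfold phiCoeff; fun_prop)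
    (fun θ ψ => by simp only [phiCoeff, Complex.exp_neg, cexp_I_mul_add_two_pi])
  have hθ := integratesToZero_deriv_theta hh (ω := thetaCoeff X)
    (by unfold thetaCoeff; fun_prop) hκ.neg (hasDerivAt_thetaCoeff X)
    (fun ψ => by simp [thetaCoeff]) (fun ψ => by simp [thetaCoeff])
  have hψ := integratesToZero_deriv_psi hh (ω := psiCoeff X)
    (by unfold psiCoeff; fun_prop) hκ (hasDerivAt_psiCoeff X)
    (fun θ ψ => by simp only [psiCoeff, Complex.exp_neg, cexp_I_mul_add_two_pi])
  rw [setIntegral_eulerMeasure, ← (((hα.add hφ).add hθ).add hψ).setIntegral_eq_zero]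
  congr! 2 with p
  rw [← smul_eq_mul, ← map_smul, eulerCycle, sin_smul_Wparam_mul]
  simp only [map_add, map_smul, smul_eq_mul, Pi.neg_apply]
  ring

end EulerCycle

section Reproducing
open Matrix Set

lemma vecMul_dotProduct_star_self {m n A : Type*} [Fintype m] [Fintype n] [NonUnitalSemiring A]
    [StarRing A] (M : Matrix m n A) (v : m → A) :
    v ᵥ* M ⬝ᵥ star (v ᵥ* M) = v ⬝ᵥ (M * Mᴴ) *ᵥ star v := by
  rw [star_vecMul, ← mulVec_mulVec, dotProduct_mulVec v]

lemma det_sub_smul_ne_zero {n : Type*} [Fintype n] [DecidableEq n] {r : ℝ} {W Z : Matrix n n ℂ}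
    (hW : W * Wᴴ = (r : ℂ) • 1) (hZ : ((r : ℂ) • (1 : Matrix n n ℂ) - Z * Zᴴ).PosDef)
    {t : ℝ} (ht : t ∈ Icc (0 : ℝ) 1) : (W - (t : ℂ) • Z).det ≠ 0 := by
  intro hdet
  obtain ⟨v, hv, hker⟩ := exists_vecMul_eq_zero_iff.2 hdet
  have heq : v ᵥ* W = (t : ℂ) • (v ᵥ* Z) := by
    rw [vecMul_sub, vecMul_smul] at hker
    exact sub_eq_zero.1 hker
  have hnorm : v ⬝ᵥ ((r : ℂ) • (1 : Matrix n n ℂ)) *ᵥ star v =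
      t ^ 2 * (v ᵥ* Z ⬝ᵥ star (v ᵥ* Z)) := by
    rw [← hW, ← vecMul_dotProduct_star_self, heq]
    simp only [star_smul, RCLike.star_def, Complex.conj_ofReal, smul_dotProduct, dotProduct_smul,
      smul_eq_mul]
    ring
  have hlt : v ᵥ* Z ⬝ᵥ star (v ᵥ* Z) < t ^ 2 * (v ᵥ* Z ⬝ᵥ star (v ᵥ* Z)) := by
    have := (posDef_iff_dotProduct_mulVec.1 hZ).2 (x := star v) (by simpa using hv)
    rwa [star_star, sub_mulVec, dotProduct_sub, hnorm, ← vecMul_dotProduct_star_self,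
      sub_pos] at this
  have hle : (t : ℂ) ^ 2 ≤ 1 := by exact_mod_cast pow_le_one₀ ht.1 ht.2
  exact hlt.not_ge (mul_le_of_le_one_left (dotProduct_self_star_nonneg _) hle)

end Reproducing

open MeasureTheory in
open scoped Matrix.Norms.L2Operator in
theorem stmt16_general (R : ℝ) {f : Matrix (Fin 2) (Fin 2) ℂ → ℂ} (hf : ContDiff ℂ 1 f)
    (Z : Matrix (Fin 2) (Fin 2) ℂ)
    (hZ : (((R ^ 2 : ℝ) : ℂ) • (1 : Matrix (Fin 2) (Fin 2) ℂ)
             - Z * Z.conjTranspose).PosDef) :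
    (Complex.I / (2 * (Real.pi : ℂ) ^ 3)) * U2int R (fun W => f W / (W - Z).det ^ 2) = f Z := by
  have hdet (t : ℝ) (ht : t ∈ Set.Icc 0 1) (p : ℝ × ℝ × ℝ × ℝ) :
      (eulerCycle R p - (t : ℂ) • Z).det ≠ 0 :=
    det_sub_smul_ne_zero (Wparam_mul_conjTranspose R _ _ _ _) hZ ht
  have hcont : Continuous fun p => f (eulerCycle R p) / (eulerCycle R p - Z).det ^ 2 :=
    .div (hf.continuous.comp (continuous_eulerCycle R))
      ((((continuous_eulerCycle R).sub continuous_const).matrix_det).pow 2)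
      fun p => pow_ne_zero 2 (by simpa using hdet 1 (by simp) p)
  have hcycle : ∫ p in eulerBox, f (eulerCycle R p) / (eulerCycle R p - Z).det ^ 2 *
      (eulerCycle R p).det ^ 2 ∂eulerMeasure = eulerMeasure.real eulerBox * f Z := by
    simpa only [Fintype.card_fin] using (isInvariantCycle_eulerCycle R).setIntegral_mul_det_pow_div
      (continuous_eulerCycle R) isCompact_eulerBox hf hdet
  rw [U2int_eq_setIntegral R hcont, hcycle, eulerMeasure_real_eulerBox]
  have hpi : (Real.pi : ℂ) ≠ 0 := by exact_mod_cast Real.pi_ne_zero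
  push_cast
  field_simp
  norm_num

/-- Reproducing formula: for every polynomial `f` in the matrix entries and every `Z ∈ 𝔻⁺_R`
(i.e. `R²·1 − ZZ*` positive definite), `(i/2π³) ∫_{U(2)_R} f(W)/(det(W−Z))² dV = f(Z)`. -/
theorem stmt16 (R : ℝ) (hR : 0 < R) (f : MvPolynomial (Fin 2 × Fin 2) ℂ)
    (Z : Matrix (Fin 2) (Fin 2) ℂ)
    (hZ : (((R ^ 2 : ℝ) : ℂ) • (1 : Matrix (Fin 2) (Fin 2) ℂ)
             - Z * Z.conjTranspose).PosDef) :
    (Complex.I / (2 * (Real.pi : ℂ) ^ 3)) *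
      U2int R (fun W => eval (fun q => W q.1 q.2) f / (W - Z).det ^ 2)
    = eval (fun q => Z q.1 q.2) f :=
  stmt16_general R (contDiff_eval_entries f) Z hZ
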